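/- Let T be a decision tree and let T' be obtained from T by a sequence of subtree raising operations pruning exactly m inner nodes in total. Let v be a node of T that is still a node of T', let P be the path from the root of T to v and P' the path from the root of T' to v. Then the node set of P' is a subset of the node set of P, and every node of P other than v that is not on P' is pruned. For a feature i, call a node w on P other than v a left-cut in feature i if feat(w)=i and the child of w on P is the right child of w, and a right-cut in feature i if feat(w)=i and the child of w on P is the left child of w. For each feature i, let L_i be the number of left-cuts in feature i on P whose threshold is strictly greater than the maximum threshold of a left-cut in feature i on P' (all of them if P' has no left-cut in feature i), and let R_i be the number of right-cuts in feature i on P whose threshold is strictly smaller than the minimum threshold of a right-cut in feature i on P' (all of them if P' has no right-cut in feature i). Then every left-cut and right-cut counted by L_i or R_i is pruned, and in particular Σ_i (L_i + R_i) ≤ m. -/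

import Mathlib

/-- The two class labels. -/
inductive Label where
  | blue
  | red
deriving DecidableEq

/-- A decision tree over examples `ι → ℝ` with classes `{blue, red}`:
every inner node carries a feature and a threshold, every leaf a class label.
An example goes to the left child if its value in the node's feature is at most
the threshold, and to the right child otherwise. -/
inductive DTree (ι : Type) where
  | leaf (c : Label)
  | node (feat : ι) (thr : ℝ) (left right : DTree ι)

namespace DTree

variable {ι : Type}

/-- The class that a decision tree assigns to an example. -/
noncomputable def classify : DTree ι → (ι → ℝ) → Label
  | .leaf c, _ => c
  | .node f t l r, e => if e f ≤ t then l.classify e else r.classify e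

/-- The routing path of an example (`false` = left child, `true` = right child);
it is the position of the leaf of the example. -/
noncomputable def route : DTree ι → (ι → ℝ) → List Bool
  | .leaf _, _ => []
  | .node f t l r, e => if e f ≤ t then false :: l.route e else true :: r.route e

/-- The subtree rooted at a position (`none` if the position is not a node). -/
def subtreeAt : DTree ι → List Bool → Option (DTree ι)
  | T, [] => some T
  | .leaf _, _ :: _ => none
  | .node _ _ l r, b :: p => (if b then r else l).subtreeAt p

/-- Replace the subtree at a given position by another tree. -/
def replaceAt : DTree ι → List Bool → DTree ι → DTree ι
  | _, [], T' => T'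
  | .leaf c, _ :: _, _ => .leaf c
  | .node f t l r, b :: p, T' =>
      if b then .node f t l (r.replaceAt p T') else .node f t (l.replaceAt p T') r

/-- The number of inner nodes of a decision tree. -/
def innerCount : DTree ι → ℕ
  | .leaf _ => 0
  | .node _ _ l r => 1 + l.innerCount + r.innerCount

/-- The position `p` is an inner node of `T`. -/
def IsInnerPos (T : DTree ι) (p : List Bool) : Prop :=
  ∃ f t l r, T.subtreeAt p = some (.node f t l r)

/-- The position `p` is a node of `T`. -/
def IsNodePos (T : DTree ι) (p : List Bool) : Prop :=
  (T.subtreeAt p).isSome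

/-- The feature and threshold of the inner node at position `p`. -/
def cutAt (T : DTree ι) (p : List Bool) : Option (ι × ℝ) :=
  match T.subtreeAt p with
  | some (.node f t _ _) => some (f, t)
  | _ => none

/-- The subtree raising operation at position `q` keeping the child in direction `b`:
the subtree rooted at `q` is replaced by the subtree rooted at its `b`-child; it prunes
the node at `q` together with all inner nodes of the subtree rooted at the other child. -/
def raiseAt (T : DTree ι) (q : List Bool) (b : Bool) : DTree ι :=
  match T.subtreeAt q with
  | some (.node _ _ l r) => T.replaceAt q (if b then r else l)
  | _ => T

end DTree

/-- `E[T,p]`: the examples of `E` whose routing through `T` passes the position `p`. -/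
noncomputable def reach {ι : Type} (E : Finset (ι → ℝ)) (T : DTree ι) (p : List Bool) :
    Finset (ι → ℝ) :=
  E.filter fun e => p <+: T.route e

/-- The number of errors of `T` on the training set `(E, lab)`. -/
noncomputable def errCount {ι : Type} (T : DTree ι) (E : Finset (ι → ℝ))
    (lab : (ι → ℝ) → Label) : ℕ :=
  (E.filter fun e => T.classify e ≠ lab e).card

/-- A most frequent label of the labeled set `(E, lab)` (blue in case of a tie). -/
def majorityLabel {ι : Type} (E : Finset (ι → ℝ)) (lab : (ι → ℝ) → Label) : Label :=
  if (E.filter fun e => lab e = Label.red).card ≤ (E.filter fun e => lab e = Label.blue).card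
  then Label.blue else Label.red

/-- One subtree replacement operation: some inner node of `T` is replaced by a leaf
labeled with a most frequent label of the examples reaching it. -/
def ReplStep {ι : Type} (E : Finset (ι → ℝ)) (lab : (ι → ℝ) → Label)
    (T T' : DTree ι) : Prop :=
  ∃ p, T.IsInnerPos p ∧
    T' = T.replaceAt p (.leaf (majorityLabel (reach E T p) lab))

/-- `T` is a reasonable decision tree for `(E, lab)`: every node is reached by some
example and every leaf carries a most frequent label of the examples reaching it. -/
def Reasonable {ι : Type} (E : Finset (ι → ℝ)) (lab : (ι → ℝ) → Label)
    (T : DTree ι) : Prop :=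
  (∀ p, T.IsNodePos p → (reach E T p).Nonempty) ∧
  (∀ p c, T.subtreeAt p = some (.leaf c) → ∀ c' : Label,
    ((reach E T p).filter fun e => lab e = c').card ≤
      ((reach E T p).filter fun e => lab e = c).card)

/-- Apply a sequence of raising operations (given by positions and kept directions). -/
def applySeq {ι : Type} : DTree ι → List (List Bool × Bool) → DTree ι
  | T, [] => T
  | T, (q, b) :: rest => applySeq (T.raiseAt q b) rest

/-- Each raising operation of the sequence is applied at an inner node. -/
def ValidSeq {ι : Type} : DTree ι → List (List Bool × Bool) → Prop
  | _, [] => True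
  | T, (q, b) :: rest => T.IsInnerPos q ∧ ValidSeq (T.raiseAt q b) rest

/-- The total number of inner nodes pruned by a sequence of raising operations. -/
def seqPruned {ι : Type} : DTree ι → List (List Bool × Bool) → ℕ
  | _, [] => 0
  | T, (q, b) :: rest =>
      (match T.subtreeAt q with
        | some (.node _ _ l r) => 1 + DTree.innerCount (if b then l else r)
        | _ => 0) + seqPruned (T.raiseAt q b) rest

/-- `T'` is obtained from `T` by a (possibly empty) sequence of subtree raising
operations. -/
def RaisedFrom {ι : Type} (T T' : DTree ι) : Prop :=
  ∃ steps, ValidSeq T steps ∧ applySeq T steps = T'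

/-- `T'` is obtained from `T` by a sequence of subtree raising operations pruning
exactly `m` inner nodes in total. -/
def RaisedFromPruning {ι : Type} (T : DTree ι) (m : ℕ) (T' : DTree ι) : Prop :=
  ∃ steps, ValidSeq T steps ∧ seqPruned T steps = m ∧ applySeq T steps = T'

/-- Tracking the position of a node through one raising operation: nodes strictly
below the raised node on the discarded side, and the raised node itself, are pruned
(`none`); all other nodes survive at a possibly shifted position. -/
def stepMap (q : List Bool) (b : Bool) (p : List Bool) : Option (List Bool) :=
  if q <+: p then
    if q ++ [b] <+: p then some (q ++ p.drop (q.length + 1)) else none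
  else some p

/-- Tracking the position of a node through a sequence of raising operations. -/
def seqMap : List (List Bool × Bool) → List Bool → Option (List Bool)
  | [], p => some p
  | (q, b) :: rest, p => (stepMap q b p).bind (seqMap rest)

/-- The number of errors of `T` on a multiset of labeled examples. -/
noncomputable def errCountM {ι : Type} (T : DTree ι) (E : Multiset ((ι → ℝ) × Label)) : ℕ :=
  (E.filter fun q => T.classify q.1 ≠ q.2).card

/-- The cut at position `v.take j` on the path from the root of `T` to `v` is a
left-cut in feature `i` (the child taken on the path is the right child) that is
counted: its threshold is strictly greater than the threshold of every left-cut in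
feature `i` on the path from the root of `T'` to `v'` (all left-cuts are counted
if that path has no left-cut in feature `i`). -/
def CountedL {ι : Type} (T T' : DTree ι) (v v' : List Bool) (i : ι) (j : ℕ) : Prop :=
  j < v.length ∧ v.getD j false = true ∧
  ∃ t : ℝ, T.cutAt (v.take j) = some (i, t) ∧
    ∀ j' < v'.length, v'.getD j' false = true →
      ∀ t' : ℝ, T'.cutAt (v'.take j') = some (i, t') → t' < t

/-- The cut at position `v.take j` is a counted right-cut in feature `i`: the child
taken on the path is the left child, and its threshold is strictly smaller than the
threshold of every right-cut in feature `i` on the path from the root of `T'`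
to `v'`. -/
def CountedR {ι : Type} (T T' : DTree ι) (v v' : List Bool) (i : ι) (j : ℕ) : Prop :=
  j < v.length ∧ v.getD j false = false ∧
  ∃ t : ℝ, T.cutAt (v.take j) = some (i, t) ∧
    ∀ j' < v'.length, v'.getD j' false = false →
      ∀ t' : ℝ, T'.cutAt (v'.take j') = some (i, t') → t < t'

namespace DTree

variable {ι : Type}

theorem cutAt_node_cons (f : ι) (t : ℝ) (l r : DTree ι) (b : Bool) (p : List Bool) :
    (node f t l r).cutAt (b :: p) = (if b then r else l).cutAt p := rfl

theorem cutAt_append_of_subtreeAt_eq_some {T S : DTree ι} {q : List Bool}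
    (h : T.subtreeAt q = some S) (x : List Bool) : T.cutAt (q ++ x) = S.cutAt x := by
  induction q generalizing T with
  | nil => simp_all [subtreeAt]
  | cons c q ih =>
    cases T with
    | leaf => simp [subtreeAt] at h
    | node f t l r => exact ih h

theorem cutAt_replaceAt_append {T S₀ : DTree ι} {q : List Bool}
    (h : T.subtreeAt q = some S₀) (S : DTree ι) (x : List Bool) :
    (T.replaceAt q S).cutAt (q ++ x) = S.cutAt x := by
  induction q generalizing T with
  | nil => simp [replaceAt]
  | cons c q ih =>
    cases T with
    | leaf => simp [subtreeAt] at h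
    | node f t l r => cases c <;> exact ih h

theorem cutAt_replaceAt_of_not_prefix (T S : DTree ι) {q u : List Bool} (h : ¬ q <+: u) :
    (T.replaceAt q S).cutAt u = T.cutAt u := by
  induction q generalizing T u with
  | nil => simp at h
  | cons c q ih =>
    cases T with
    | leaf => rfl
    | node f t l r =>
      cases u with
      | nil => cases c <;> rfl
      | cons e u =>
        cases c <;> cases e <;> simp_all [replaceAt, cutAt_node_cons]

end DTree

theorem stepMap_eq_some_iff {q u u' : List Bool} {b : Bool} :
    stepMap q b u = some u' ↔ (¬ q <+: u ∧ u' = u) ∨ ∃ x, u = q ++ b :: x ∧ u' = q ++ x := by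
  unfold stepMap
  split_ifs with h₁ h₂
  · obtain ⟨x, rfl⟩ := h₂
    simp [List.drop_append, List.drop_of_length_le, eq_comm]
  · simp only [h₁, not_true_eq_false, false_and, false_or, false_iff]
    rintro ⟨x, rfl, -⟩
    exact h₂ ⟨x, by simp⟩
  · simp only [h₁, not_false_eq_true, true_and, Option.some.injEq, eq_comm (a := u')]
    refine ⟨Or.inl, ?_⟩
    rintro (h | ⟨x, rfl, -⟩)
    · exact h
    · simp at h₁

theorem prefix_of_stepMap_prefix {q u u' v v' : List Bool} {b : Bool}
    (hu : stepMap q b u = some u') (hv : stepMap q b v = some v') (h : u' <+: v') :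
    u <+: v := by
  rw [stepMap_eq_some_iff] at hu hv
  rcases hu with ⟨hu, rfl⟩ | ⟨x, rfl, rfl⟩ <;> rcases hv with ⟨hv, rfl⟩ | ⟨w, rfl, rfl⟩
  · exact h
  · exact ((List.prefix_or_prefix_of_prefix h (List.prefix_append q w)).resolve_right hu).trans
      (List.prefix_append _ _)
  · exact absurd ((List.prefix_append q x).trans h) hv
  · simpa using h

theorem stepMap_concat_prefix {q u u' v v' : List Bool} {b c : Bool}
    (hu : stepMap q b u = some u') (hv : stepMap q b v = some v') (h : u ++ [c] <+: v) :
    u' ++ [c] <+: v' := by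
  rw [stepMap_eq_some_iff] at hu hv
  rcases hu with ⟨hu, rfl⟩ | ⟨x, rfl, rfl⟩ <;> rcases hv with ⟨hv, rfl⟩ | ⟨w, rfl, rfl⟩
  · exact h
  · have hq : u' ++ [c] <+: q := by
      rcases List.prefix_or_prefix_of_prefix h (List.prefix_append q (b :: w)) with hq | hq
      · exact hq
      · rcases List.prefix_concat_iff.1 hq with rfl | hq
        · exact List.prefix_rfl
        · exact absurd hq hu
    exact hq.trans (List.prefix_append _ _)
  · exact absurd (((List.prefix_append q _).trans (List.prefix_append _ _)).trans h) hv
  · simpa using h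

theorem cutAt_raiseAt_of_stepMap {ι : Type} {T : DTree ι} {q u u' : List Bool} {b : Bool}
    (hq : T.IsInnerPos q) (hu : stepMap q b u = some u') :
    (T.raiseAt q b).cutAt u' = T.cutAt u := by
  obtain ⟨f, t, l, r, hq⟩ := hq
  simp only [DTree.raiseAt, hq]
  rcases stepMap_eq_some_iff.1 hu with ⟨hu, rfl⟩ | ⟨x, rfl, rfl⟩
  · exact DTree.cutAt_replaceAt_of_not_prefix _ _ hu
  · rw [DTree.cutAt_replaceAt_append hq, DTree.cutAt_append_of_subtreeAt_eq_some hq,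
      DTree.cutAt_node_cons]

theorem prefix_of_seqMap_prefix {steps : List (List Bool × Bool)} {u u' v v' : List Bool}
    (hu : seqMap steps u = some u') (hv : seqMap steps v = some v') (h : u' <+: v') :
    u <+: v := by
  induction steps generalizing u v with
  | nil => simp_all [seqMap]
  | cons s steps ih =>
    obtain ⟨u₁, hu₁, hu⟩ := Option.bind_eq_some_iff.1 hu
    obtain ⟨v₁, hv₁, hv⟩ := Option.bind_eq_some_iff.1 hv
    exact prefix_of_stepMap_prefix hu₁ hv₁ (ih hu hv)

theorem seqMap_concat_prefix {steps : List (List Bool × Bool)} {u u' v v' : List Bool} {c : Bool}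
    (hu : seqMap steps u = some u') (hv : seqMap steps v = some v') (h : u ++ [c] <+: v) :
    u' ++ [c] <+: v' := by
  induction steps generalizing u v with
  | nil => simp_all [seqMap]
  | cons s steps ih =>
    obtain ⟨u₁, hu₁, hu⟩ := Option.bind_eq_some_iff.1 hu
    obtain ⟨v₁, hv₁, hv⟩ := Option.bind_eq_some_iff.1 hv
    exact ih hu hv (stepMap_concat_prefix hu₁ hv₁ h)

theorem cutAt_applySeq_of_seqMap {ι : Type} {T : DTree ι} {steps : List (List Bool × Bool)}
    {u u' : List Bool} (hval : ValidSeq T steps) (hu : seqMap steps u = some u') :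
    (applySeq T steps).cutAt u' = T.cutAt u := by
  induction steps generalizing T u with
  | nil => simp_all [seqMap, applySeq]
  | cons s steps ih =>
    obtain ⟨u₁, hu₁, hu⟩ := Option.bind_eq_some_iff.1 hu
    exact (ih hval.2 hu).trans (cutAt_raiseAt_of_stepMap hval.1 hu₁)

theorem card_pruned_on_path_le_seqPruned {ι : Type} {T : DTree ι}
    {steps : List (List Bool × Bool)} {v v' : List Bool} (hval : ValidSeq T steps)
    (hv : seqMap steps v = some v') :
    ((Finset.range v.length).filter fun j => seqMap steps (v.take j) = none).card
      ≤ seqPruned T steps := by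
  induction steps generalizing T v with
  | nil => simp [seqMap]
  | cons s steps ih =>
    obtain ⟨q, b⟩ := s
    obtain ⟨v₁, hv₁, hv⟩ := Option.bind_eq_some_iff.1 hv
    obtain ⟨⟨f, t, l, r, hq⟩, hval⟩ := hval
    have ih := ih hval hv
    simp only [seqPruned, hq]
    rcases stepMap_eq_some_iff.1 hv₁ with ⟨hqv, rfl⟩ | ⟨x, rfl, rfl⟩
    · have h (j : ℕ) : stepMap q b (v₁.take j) = some (v₁.take j) :=
        stepMap_eq_some_iff.2 (.inl ⟨fun h => hqv (h.trans (List.take_prefix _ _)), rfl⟩)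
      simp only [seqMap, h, Option.bind_some]
      omega
    · have hsub : ((Finset.range (q ++ b :: x).length).filter fun j =>
            seqMap ((q, b) :: steps) ((q ++ b :: x).take j) = none) ⊆
          insert q.length (((Finset.range (q ++ x).length).filter fun j =>
            seqMap steps ((q ++ x).take j) = none).image
              fun j => if j < q.length then j else j + 1) := by
        intro j hj
        simp only [Finset.mem_filter, Finset.mem_range, List.length_append, List.length_cons,
          seqMap] at hj
        obtain ⟨hjlt, hj⟩ := hj
        simp only [Finset.mem_insert, Finset.mem_image, Finset.mem_filter, Finset.mem_range,
          List.length_append]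
        rcases lt_trichotomy j q.length with hlt | heq | hgt
        · have h : stepMap q b ((q ++ b :: x).take j) = some ((q ++ x).take j) := by
            refine stepMap_eq_some_iff.2 (.inl ⟨fun h => ?_, ?_⟩)
            · have := h.length_le
              simp at this
              omega
            · rw [List.take_append_of_le_length hlt.le, List.take_append_of_le_length hlt.le]
          rw [h] at hj
          exact .inr ⟨j, ⟨by omega, hj⟩, if_pos hlt⟩
        · exact .inl heq
        · obtain ⟨k, rfl⟩ := Nat.exists_eq_add_of_lt hgt
          have h : stepMap q b ((q ++ b :: x).take (q.length + k + 1)) =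
              some ((q ++ x).take (q.length + k)) := by
            refine stepMap_eq_some_iff.2 (.inr ⟨x.take k, ?_, ?_⟩)
            · rw [Nat.add_assoc, List.take_length_add_append, List.take_succ_cons]
            · rw [List.take_length_add_append]
          rw [h] at hj
          exact .inr ⟨q.length + k, ⟨by omega, hj⟩, if_neg (by omega)⟩
      have := (Finset.card_le_card hsub).trans (Finset.card_insert_le _ _)
      refine this.trans ((Nat.add_comm _ _).trans_le ?_)
      exact Nat.add_le_add (Nat.le_add_right 1 _) (Finset.card_image_le.trans ih)

/-- A cut on the path to a surviving node that itself survives is a cut on the new path, with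
the same feature, threshold and direction. -/
theorem exists_cutAt_applySeq_of_seqMap_take {ι : Type} {T : DTree ι}
    {steps : List (List Bool × Bool)} {v v' u' : List Bool} {j : ℕ} (hval : ValidSeq T steps)
    (hv : seqMap steps v = some v') (hj : j < v.length)
    (hu : seqMap steps (v.take j) = some u') :
    ∃ j' < v'.length, v'.getD j' false = v.getD j false ∧
      (applySeq T steps).cutAt (v'.take j') = T.cutAt (v.take j) := by
  have h : v.take j ++ [v[j]] <+: v := by
    rw [List.take_append_getElem]
    exact List.take_prefix _ _
  obtain ⟨w, rfl⟩ := seqMap_concat_prefix hu hv h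
  refine ⟨u'.length, by simp, by simp [hj], ?_⟩
  simpa using cutAt_applySeq_of_seqMap hval hu

theorem CountedL.seqMap_take_eq_none {ι : Type} {T : DTree ι} {steps : List (List Bool × Bool)}
    {v v' : List Bool} {i : ι} {j : ℕ} (h : CountedL T (applySeq T steps) v v' i j)
    (hval : ValidSeq T steps) (hv : seqMap steps v = some v') :
    seqMap steps (v.take j) = none := by
  obtain ⟨hj, hdir, t, hcut, hmax⟩ := h
  refine Option.eq_none_iff_forall_ne_some.2 fun u' hu => ?_
  obtain ⟨j', hj', hdir', hcut'⟩ := exists_cutAt_applySeq_of_seqMap_take hval hv hj hu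
  exact lt_irrefl t (hmax j' hj' (hdir'.trans hdir) t (hcut'.trans hcut))

theorem CountedR.seqMap_take_eq_none {ι : Type} {T : DTree ι} {steps : List (List Bool × Bool)}
    {v v' : List Bool} {i : ι} {j : ℕ} (h : CountedR T (applySeq T steps) v v' i j)
    (hval : ValidSeq T steps) (hv : seqMap steps v = some v') :
    seqMap steps (v.take j) = none := by
  obtain ⟨hj, hdir, t, hcut, hmin⟩ := h
  refine Option.eq_none_iff_forall_ne_some.2 fun u' hu => ?_
  obtain ⟨j', hj', hdir', hcut'⟩ := exists_cutAt_applySeq_of_seqMap_take hval hv hj hu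
  exact lt_irrefl t (hmin j' hj' (hdir'.trans hdir) t (hcut'.trans hcut))

open Classical in
/-- Every position on the path is counted for at most one feature and direction. -/
theorem sum_card_counted_le {d : ℕ} (T T' : DTree (Fin d)) (v v' : List Bool) (s : Finset ℕ)
    (hL : ∀ i j, CountedL T T' v v' i j → j ∈ s) (hR : ∀ i j, CountedR T T' v v' i j → j ∈ s) :
    ∑ i : Fin d, (((Finset.range v.length).filter fun j => CountedL T T' v v' i j).card
      + ((Finset.range v.length).filter fun j => CountedR T T' v v' i j).card) ≤ s.card := by
  have hdisj (i : Fin d) : Disjoint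
      ((Finset.range v.length).filter fun j => CountedL T T' v v' i j)
      ((Finset.range v.length).filter fun j => CountedR T T' v v' i j) := by
    refine Finset.disjoint_filter.2 fun j _ hl hr => ?_
    exact absurd (hl.2.1.symm.trans hr.2.1) (by simp)
  have hfeat {i : Fin d} {j : ℕ} (h : CountedL T T' v v' i j ∨ CountedR T T' v v' i j) :
      (T.cutAt (v.take j)).map Prod.fst = some i := by
    rcases h with ⟨-, -, t, h, -⟩ | ⟨-, -, t, h, -⟩ <;> simp [h]
  simp_rw [← Finset.card_union_of_disjoint (hdisj _), ← Finset.filter_or]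
  rw [← Finset.card_biUnion]
  · refine Finset.card_le_card fun j hj => ?_
    obtain ⟨i, -, hj⟩ := Finset.mem_biUnion.1 hj
    exact (Finset.mem_filter.1 hj).2.elim (hL i j) (hR i j)
  · intro i _ i' _ hne
    refine Finset.disjoint_filter.2 fun j _ h h' => hne ?_
    exact Option.some_injective _ ((hfeat h).symm.trans (hfeat h'))

open Classical in
/-- Let `T'` be obtained from `T` by raising operations pruning
exactly `m` inner nodes, and let `v` be a node of `T` surviving at position `v'`
in `T'`. Then the path `P'` from the root of `T'` to `v` consists of surviving
nodes of the path `P` from the root of `T` to `v`; every node of `P` other than `v`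
that is not on `P'` is pruned; every counted left- or right-cut (whose threshold
beats all corresponding cuts on `P'` in its feature) is pruned; and in particular
the total number of counted cuts is at most `m`. -/
theorem stmt6 {d : ℕ} (T : DTree (Fin d)) (steps : List (List Bool × Bool))
    (hval : ValidSeq T steps) (m : ℕ) (hm : seqPruned T steps = m)
    (v : List Bool) (hv : T.IsNodePos v)
    (v' : List Bool) (hsurv : seqMap steps v = some v') :
    (∀ u u', seqMap steps u = some u' → u' <+: v' → u <+: v)
    ∧ (∀ u, u <+: v → u ≠ v →
        ¬ (∃ u', seqMap steps u = some u' ∧ u' <+: v') → seqMap steps u = none)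
    ∧ (∀ (i : Fin d) (j : ℕ), CountedL T (applySeq T steps) v v' i j →
        seqMap steps (v.take j) = none)
    ∧ (∀ (i : Fin d) (j : ℕ), CountedR T (applySeq T steps) v v' i j →
        seqMap steps (v.take j) = none)
    ∧ (∑ i : Fin d,
        (((Finset.range v.length).filter
            (fun j => CountedL T (applySeq T steps) v v' i j)).card
          + ((Finset.range v.length).filter
            (fun j => CountedR T (applySeq T steps) v v' i j)).card)) ≤ m := by
  refine ⟨fun u u' hu h => prefix_of_seqMap_prefix hu hsurv h, fun u hpre hne hnot => ?_,
    fun i j h => h.seqMap_take_eq_none hval hsurv,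
    fun i j h => h.seqMap_take_eq_none hval hsurv, ?_⟩
  · refine Option.eq_none_iff_forall_ne_some.2 fun u' hu => hnot ⟨u', hu, ?_⟩
    obtain ⟨_ | ⟨c, w⟩, rfl⟩ := hpre
    · simp at hne
    · exact (List.prefix_append _ _).trans
        (seqMap_concat_prefix (c := c) hu hsurv ⟨w, by simp⟩)
  · subst hm
    refine (sum_card_counted_le T _ v v' _ (fun i j h => ?_) fun i j h => ?_).trans
      (card_pruned_on_path_le_seqPruned hval hsurv)
    · exact Finset.mem_filter.2
        ⟨Finset.mem_range.2 h.1, h.seqMap_take_eq_none hval hsurv⟩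
    · exact Finset.mem_filter.2
        ⟨Finset.mem_range.2 h.1, h.seqMap_take_eq_none hval hsurv⟩
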